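/- arXiv:1706.05828 — 2 statements merged into one kernel-verified Lean document; each statement's English description precedes it below -/
import Mathlib

section
/- Let X be a symmetric solution of CGCARE(Σ), and for s ∈ ℂ with s I_n − A invertible set T_X(s) = I_m + R† S_Xᵀ (s I_n − A)⁻¹ B. Then for every s ∈ ℂ such that both s I_n − A and −s I_n − Aᵀ are invertible, the Popov function satisfies Φ(s) = Bᵀ(−s I_n − Aᵀ)⁻¹ Q (s I_n − A)⁻¹ B + Bᵀ(−s I_n − Aᵀ)⁻¹ S + Sᵀ (s I_n − A)⁻¹ B + R = T_X(−s)ᵀ R T_X(s). -/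
/-!
Write `F = s I - A`, `G = -s I - Aᵀ` and `K = S + X B`. Since `XA + AᵀX = -(X F + G X)`, the Riccati
equation reads `K R† Kᵀ = Q - X F - G X`, so that
`G⁻¹ (K R† Kᵀ) F⁻¹ = G⁻¹ Q F⁻¹ - G⁻¹ X - X F⁻¹` (`popov_identity`).

The Popov matrix being symmetric makes `R` and hence `R†` symmetric (`pinv_symm`), and the kernel
condition gives `K R† R = K`, `R R† Kᵀ = Kᵀ`. Expanding `T(-s)ᵀ R T(s)` therefore yields
`R + Bᵀ G⁻¹ K + Kᵀ F⁻¹ B + Bᵀ G⁻¹ (K R† Kᵀ) F⁻¹ B`, in which all terms containing `X` cancel.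
-/

open Matrix

/-- Entrywise embedding of a real matrix into the complex matrices. -/
def cm {α β : Type*} (M : Matrix α β ℝ) : Matrix α β ℂ := M.map Complex.ofReal

/-- The pseudoinverse of a symmetric matrix is symmetric: its transpose satisfies the same
Penrose equations, and these have only one solution. -/
theorem pinv_symm {m : ℕ} {R P : Matrix (Fin m) (Fin m) ℝ} (hR : Rᵀ = R)
    (h1 : R * P * R = R) (h2 : P * R * P = P)
    (h3 : (R * P)ᵀ = R * P) (h4 : (P * R)ᵀ = P * R) : Pᵀ = P := by
  have e3 : Pᵀ * R = R * P := by rw [← h3, transpose_mul, hR]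
  have e4 : R * Pᵀ = P * R := by rw [← h4, transpose_mul, hR]
  -- `R P` and `P R` are orthogonal projections with the same range, namely that of `R`.
  have e : R * P = P * R := by
    have t1 : R * Pᵀ * R = R := by
      have := congrArg transpose h1
      simpa [transpose_mul, hR, Matrix.mul_assoc] using this
    have a : (P * R) * (R * P) = R * P := by
      rw [← e4, ← Matrix.mul_assoc, t1]
    have b : (R * P) * (P * R) = P * R := by
      rw [← e4, ← Matrix.mul_assoc, h1]
    -- `(P R)(R P) = R P` transposes to `(R P)(P R) = R P`.
    have c := congrArg transpose a
    rw [transpose_mul, h3, h4] at c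
    rw [← c, b]
  have t2 : Pᵀ * R * Pᵀ = Pᵀ := by
    have := congrArg transpose h2
    simpa [transpose_mul, hR, Matrix.mul_assoc] using this
  calc Pᵀ = Pᵀ * R * Pᵀ := t2.symm
    _ = P * R * Pᵀ := by rw [e3, e]
    _ = P * R * P := by rw [Matrix.mul_assoc, e4, Matrix.mul_assoc, e]
    _ = P := h2

/-- The algebraic core, over an arbitrary commutative ring, with `F = s I - A`, `G = -s I - Aᵀ`;
`K` and `L` stand for `S + X B` and its transpose. -/
theorem popov_identity {k : Type*} [CommRing k] {n m : ℕ} (F G Q X : Matrix (Fin n) (Fin n) k)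
    (B S K : Matrix (Fin n) (Fin m) k) (L : Matrix (Fin m) (Fin n) k)
    (R P : Matrix (Fin m) (Fin m) k)
    (hF : IsUnit F.det) (hG : IsUnit G.det)
    (hK : K = S + X * B) (hL : L = Sᵀ + Bᵀ * X)
    (hric : K * P * L = Q - X * F - G * X)
    (hKR : K * P * R = K) (hRL : R * P * L = L) :
    Bᵀ * G⁻¹ * Q * F⁻¹ * B + Bᵀ * G⁻¹ * S + Sᵀ * F⁻¹ * B + R
      = (1 + Bᵀ * G⁻¹ * K * P) * R * (1 + P * L * F⁻¹ * B) := by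
  have key : G⁻¹ * (K * P * L) * F⁻¹ = G⁻¹ * Q * F⁻¹ - G⁻¹ * X - X * F⁻¹ := by
    rw [hric, Matrix.mul_sub, Matrix.mul_sub, Matrix.sub_mul, Matrix.sub_mul,
      ← Matrix.mul_assoc G⁻¹ X F, Matrix.mul_nonsing_inv_cancel_right _ _ hF,
      Matrix.nonsing_inv_mul_cancel_left _ _ hG]
  have e1 : (1 + Bᵀ * G⁻¹ * K * P) * R = R + Bᵀ * G⁻¹ * K := by
    rw [Matrix.add_mul, Matrix.one_mul, Matrix.mul_assoc _ P R, Matrix.mul_assoc _ K,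
      ← Matrix.mul_assoc K, hKR]
  have e2 : R * (P * L * F⁻¹ * B) = L * F⁻¹ * B := by
    simp only [← Matrix.mul_assoc, hRL]
  have e3 : Bᵀ * G⁻¹ * K * (P * L * F⁻¹ * B)
      = Bᵀ * (G⁻¹ * (K * P * L) * F⁻¹) * B := by
    simp only [← Matrix.mul_assoc]
  rw [e1, Matrix.mul_add, Matrix.mul_one, Matrix.add_mul, e2, e3, key, hK, hL]
  simp only [Matrix.mul_add, Matrix.add_mul, Matrix.mul_sub, Matrix.sub_mul, ← Matrix.mul_assoc]
  abel

theorem cm_mul {a b c : ℕ} (M : Matrix (Fin a) (Fin b) ℝ) (N : Matrix (Fin b) (Fin c) ℝ) :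
    cm (M * N) = cm M * cm N :=
  Matrix.map_mul (f := Complex.ofRealHom)

theorem cm_add {a b : ℕ} (M N : Matrix (Fin a) (Fin b) ℝ) : cm (M + N) = cm M + cm N := by
  ext; simp [cm]

theorem cm_transpose {a b : ℕ} (M : Matrix (Fin a) (Fin b) ℝ) : cm Mᵀ = (cm M)ᵀ := rfl

theorem stmt_5 (n m : ℕ) (hn : 0 < n) (hm : 0 < m)
    (A Q : Matrix (Fin n) (Fin n) ℝ) (B S : Matrix (Fin n) (Fin m) ℝ)
    (R : Matrix (Fin m) (Fin m) ℝ)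
    (hPi : (Matrix.fromBlocks Q S Sᵀ R).PosSemidef)
    (Rd : Matrix (Fin m) (Fin m) ℝ)
    (hRd1 : R * Rd * R = R) (hRd2 : Rd * R * Rd = Rd)
    (hRd3 : (R * Rd)ᵀ = R * Rd) (hRd4 : (Rd * R)ᵀ = Rd * R)
    (X : Matrix (Fin n) (Fin n) ℝ) (hX : Xᵀ = X)
    (hgcare : X * A + Aᵀ * X - (S + X * B) * Rd * (S + X * B)ᵀ + Q = 0)
    (hker : ∀ v : Fin m → ℝ, R.mulVec v = 0 → (S + X * B).mulVec v = 0)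
    (T : ℂ → Matrix (Fin m) (Fin m) ℂ)
    (hT : ∀ z : ℂ, IsUnit (z • (1 : Matrix (Fin n) (Fin n) ℂ) - cm A).det →
      T z = 1 + cm Rd * (cm (S + X * B))ᵀ *
          (z • (1 : Matrix (Fin n) (Fin n) ℂ) - cm A)⁻¹ * cm B)
    (s : ℂ)
    (h1 : IsUnit (s • (1 : Matrix (Fin n) (Fin n) ℂ) - cm A).det)
    (h2 : IsUnit ((-s) • (1 : Matrix (Fin n) (Fin n) ℂ) - (cm A)ᵀ).det) :
    (cm B)ᵀ * ((-s) • (1 : Matrix (Fin n) (Fin n) ℂ) - (cm A)ᵀ)⁻¹ *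
        cm Q * (s • (1 : Matrix (Fin n) (Fin n) ℂ) - cm A)⁻¹ * cm B
      + (cm B)ᵀ * ((-s) • (1 : Matrix (Fin n) (Fin n) ℂ) - (cm A)ᵀ)⁻¹ * cm S
      + (cm S)ᵀ * (s • (1 : Matrix (Fin n) (Fin n) ℂ) - cm A)⁻¹ * cm B
      + cm R
    = (T (-s))ᵀ * cm R * T s := by
  have hR : Rᵀ = R := by
    have h := hPi.isHermitian
    rw [Matrix.isHermitian_fromBlocks_iff] at h
    simpa [Matrix.IsHermitian, conjTranspose_eq_transpose_of_trivial] using h.2.2.2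
  have hP : Rdᵀ = Rd := pinv_symm hR hRd1 hRd2 hRd3 hRd4
  -- The columns of `1 - R† R` lie in the kernel of `R`, hence in that of `S + X B`.
  have hKR : (S + X * B) * Rd * R = S + X * B := by
    have h : (S + X * B) * (1 - Rd * R) = 0 := by
      refine Matrix.ext_of_mulVec_single fun i => ?_
      rw [← Matrix.mulVec_mulVec, Matrix.zero_mulVec]
      apply hker
      rw [Matrix.mulVec_mulVec, Matrix.mul_sub, Matrix.mul_one, ← Matrix.mul_assoc, hRd1, sub_self,
        Matrix.zero_mulVec]
    rw [Matrix.mul_sub, Matrix.mul_one, sub_eq_zero, ← Matrix.mul_assoc] at h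
    exact h.symm
  have hRL : R * Rd * (S + X * B)ᵀ = (S + X * B)ᵀ := by
    have h := congrArg transpose hKR
    rwa [transpose_mul, transpose_mul, hR, hP, ← Matrix.mul_assoc] at h
  have hric : (S + X * B) * Rd * (S + X * B)ᵀ = X * A + Aᵀ * X + Q := by
    rw [← sub_eq_zero, ← neg_eq_zero, ← hgcare]
    abel
  have h2' : IsUnit ((-s) • (1 : Matrix (Fin n) (Fin n) ℂ) - cm A).det := by
    rw [← Matrix.det_transpose]
    simpa using h2
  have hTt : (T (-s))ᵀ = 1 + (cm B)ᵀ * ((-s) • (1 : Matrix (Fin n) (Fin n) ℂ) - (cm A)ᵀ)⁻¹ *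
      cm (S + X * B) * cm Rd := by
    rw [hT _ h2']
    simp only [transpose_add, transpose_mul, transpose_one, transpose_nonsing_inv, transpose_sub,
      transpose_smul, transpose_transpose, Matrix.mul_assoc]
    rw [← cm_transpose Rd, hP]
  rw [hTt, hT s h1]
  refine popov_identity _ _ (cm Q) (cm X) (cm B) (cm S) (cm (S + X * B)) (cm (S + X * B))ᵀ
    (cm R) (cm Rd) h1 h2 ?_ ?_ ?_ ?_ ?_
  · rw [cm_add, cm_mul]
  · rw [cm_add, cm_mul, transpose_add, transpose_mul, ← cm_transpose X, hX]
  · rw [← cm_transpose, ← cm_mul, ← cm_mul, hric, cm_add, cm_add, cm_mul, cm_mul, cm_transpose,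
      Matrix.mul_sub, Matrix.sub_mul, Matrix.mul_smul, Matrix.smul_mul, Matrix.mul_one,
      Matrix.one_mul, neg_smul]
    abel
  · rw [← cm_mul, ← cm_mul, hKR]
  · rw [← cm_transpose, ← cm_mul, ← cm_mul, hRL]
end

section
/- (The restriction of A_X to 𝓡_{0,X} is independent of X.) Let X and Y be two symmetric solutions of CGCARE(Σ) and set F = A − B R† Sᵀ. Then for every vector v in the ℝ-linear span of the columns of the matrices F^k (B G), k = 0, 1, …, n−1, one has A_X v = A_Y v. -/
/-!
Write `F = A - B R† Sᵀ` and `Q₀ = Q - S R† Sᵀ`. Since `S_Xᵀ = Sᵀ + Bᵀ X`, one has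
`A_X = F - B R† Bᵀ X`, so it suffices that every solution `X` vanishes on the span of the columns
of the matrices `F ^ k B G`: then `A_X v = F v` there, whatever `X` is.

Positive semidefiniteness of the Popov matrix gives `ker R ⊆ ker S`, i.e. `S G = 0`, so the kernel
condition on `S_X` becomes `X B G = 0`. The Riccati equation reads
`X F + Fᵀ X - X B R† Bᵀ X + Q₀ = 0` with `Q₀` positive semidefinite (a generalized Schur
complement). If `X w = 0`, pairing this equation with `w` gives `wᵀ Q₀ w = 0`, hence `Q₀ w = 0`,
and applying the equation to `w` leaves `X F w = 0`. Thus `ker X` is `F`-invariant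
(`mulVec_F_eq_zero`) and contains the columns of `B G`.
-/

open Matrix

/-- The Moore-Penrose inverse of a symmetric matrix is symmetric. -/
lemma pinv_symm_s15 {m : ℕ} {R Rd : Matrix (Fin m) (Fin m) ℝ} (hR : Rᵀ = R)
    (hRd1 : R * Rd * R = R) (hRd2 : Rd * R * Rd = Rd)
    (hRd3 : (R * Rd)ᵀ = R * Rd) (hRd4 : (Rd * R)ᵀ = Rd * R) : Rdᵀ = Rd := by
  have h3 : Rdᵀ * R = R * Rd := by simpa [transpose_mul, hR] using hRd3
  have h4 : R * Rdᵀ = Rd * R := by simpa [transpose_mul, hR] using hRd4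
  have h1 : R * Rdᵀ * R = R := by
    have := congrArg transpose hRd1
    simpa [transpose_mul, hR, Matrix.mul_assoc] using this
  -- `R R†` and `R† R` are both the orthogonal projection onto the range of `R`.
  have hc : R * Rd = Rd * R := by
    have e1 : R * Rd = Rd * R * (R * Rd) := by
      rw [← h4, ← Matrix.mul_assoc, h1]
    have e2 : Rd * R = Rd * R * (R * Rd) := by
      rw [← h3, Matrix.mul_assoc Rd R (Rdᵀ * R), ← Matrix.mul_assoc R, h1]
    exact e1.trans e2.symm
  have h2 : Rdᵀ * R * Rdᵀ = Rdᵀ := by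
    have := congrArg transpose hRd2
    simpa [transpose_mul, hR, Matrix.mul_assoc] using this
  calc Rdᵀ = Rdᵀ * R * Rdᵀ := h2.symm
    _ = Rd * (R * Rdᵀ) := by rw [h3, hc, Matrix.mul_assoc]
    _ = Rd * R * Rd := by rw [Matrix.mul_assoc, h4, hc]
    _ = Rd := hRd2

lemma popov_ker {n m : ℕ} {Q : Matrix (Fin n) (Fin n) ℝ} {S : Matrix (Fin n) (Fin m) ℝ}
    {R : Matrix (Fin m) (Fin m) ℝ} (hPi : (Matrix.fromBlocks Q S Sᵀ R).PosSemidef)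
    {u : Fin m → ℝ} (hu : R *ᵥ u = 0) : S *ᵥ u = 0 := by
  have h := (hPi.dotProduct_mulVec_zero_iff (Sum.elim 0 u)).1 (by
    simp [fromBlocks_mulVec, hu, dotProduct, Fintype.sum_sum_type])
  funext i
  simpa [fromBlocks_mulVec] using congrFun h (Sum.inl i)

/-- If the quadratic form of the generalized Schur complement `Q - S R† Sᵀ` vanishes at `w`, then
the complement kills `w`: test the Popov matrix on `(w, -R† Sᵀ w)`. -/
lemma schur_mulVec_eq_zero {n m : ℕ} {Q : Matrix (Fin n) (Fin n) ℝ}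
    {S : Matrix (Fin n) (Fin m) ℝ} {R Rd : Matrix (Fin m) (Fin m) ℝ}
    (hPi : (Matrix.fromBlocks Q S Sᵀ R).PosSemidef) (hS : R * Rd * Sᵀ = Sᵀ)
    {w : Fin n → ℝ} (hw : w ⬝ᵥ ((Q - S * Rd * Sᵀ) *ᵥ w) = 0) :
    (Q - S * Rd * Sᵀ) *ᵥ w = 0 := by
  have key : Matrix.fromBlocks Q S Sᵀ R *ᵥ Sum.elim w (-((Rd * Sᵀ) *ᵥ w))
      = Sum.elim ((Q - S * Rd * Sᵀ) *ᵥ w) 0 := by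
    rw [fromBlocks_mulVec]
    congr 1
    · simp [sub_mulVec, mulVec_neg, Matrix.mul_assoc, ← sub_eq_add_neg]
    · simp [mulVec_neg, ← Matrix.mul_assoc, hS]
  have h := (hPi.dotProduct_mulVec_zero_iff (Sum.elim w (-((Rd * Sᵀ) *ᵥ w)))).1 (by
    rw [key]
    simpa [dotProduct, Fintype.sum_sum_type] using hw)
  rw [key] at h
  funext i
  simpa using congrFun h (Sum.inl i)

/-- The kernel of a solution of the Riccati equation is invariant under `F = A - B R† Sᵀ`. -/
lemma mulVec_F_eq_zero {n m : ℕ} {A Q X : Matrix (Fin n) (Fin n) ℝ}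
    {B S : Matrix (Fin n) (Fin m) ℝ} {R Rd : Matrix (Fin m) (Fin m) ℝ}
    (hPi : (Matrix.fromBlocks Q S Sᵀ R).PosSemidef) (hS : R * Rd * Sᵀ = Sᵀ)
    (hRd : Rdᵀ = Rd) (hX : Xᵀ = X)
    (hgcare : X * A + Aᵀ * X - (S + X * B) * Rd * (S + X * B)ᵀ + Q = 0)
    {w : Fin n → ℝ} (hw : X *ᵥ w = 0) : X *ᵥ ((A - B * (Rd * Sᵀ)) *ᵥ w) = 0 := by
  have hric : X * (A - B * (Rd * Sᵀ)) + (Q - S * Rd * Sᵀ)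
      = -(((A - B * (Rd * Sᵀ))ᵀ - X * B * Rd * Bᵀ) * X) := by
    rw [← sub_eq_zero, ← hgcare]
    simp only [transpose_add, transpose_sub, transpose_mul, transpose_transpose, hRd, hX,
      Matrix.mul_add, Matrix.add_mul, Matrix.mul_sub, Matrix.sub_mul, Matrix.mul_assoc]
    abel
  have happ : X *ᵥ ((A - B * (Rd * Sᵀ)) *ᵥ w) + (Q - S * Rd * Sᵀ) *ᵥ w = 0 := by
    rw [mulVec_mulVec, ← add_mulVec, hric, neg_mulVec, ← mulVec_mulVec, hw, mulVec_zero, neg_zero]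
  have hq : w ⬝ᵥ ((Q - S * Rd * Sᵀ) *ᵥ w) = 0 := by
    have h := congrArg (fun z => w ⬝ᵥ z) happ
    have hwX : w ᵥ* X = 0 := by rw [← hX, vecMul_transpose, hw]
    simp only [dotProduct_add, dotProduct_mulVec w X, hwX, zero_dotProduct, zero_add,
      dotProduct_zero] at h
    exact h
  simpa [schur_mulVec_eq_zero hPi hS hq] using happ

theorem stmt_15 (n m : ℕ) (hn : 0 < n) (hm : 0 < m)
    (A Q : Matrix (Fin n) (Fin n) ℝ) (B S : Matrix (Fin n) (Fin m) ℝ)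
    (R : Matrix (Fin m) (Fin m) ℝ)
    (hPi : (Matrix.fromBlocks Q S Sᵀ R).PosSemidef)
    (Rd : Matrix (Fin m) (Fin m) ℝ)
    (hRd1 : R * Rd * R = R) (hRd2 : Rd * R * Rd = Rd)
    (hRd3 : (R * Rd)ᵀ = R * Rd) (hRd4 : (Rd * R)ᵀ = Rd * R)
    (X : Matrix (Fin n) (Fin n) ℝ) (hX : Xᵀ = X)
    (hgcareX : X * A + Aᵀ * X - (S + X * B) * Rd * (S + X * B)ᵀ + Q = 0)
    (hkerX : ∀ v : Fin m → ℝ, R.mulVec v = 0 → (S + X * B).mulVec v = 0)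
    (Y : Matrix (Fin n) (Fin n) ℝ) (hY : Yᵀ = Y)
    (hgcareY : Y * A + Aᵀ * Y - (S + Y * B) * Rd * (S + Y * B)ᵀ + Q = 0)
    (hkerY : ∀ v : Fin m → ℝ, R.mulVec v = 0 → (S + Y * B).mulVec v = 0) :
    ∀ v : Fin n → ℝ,
      v ∈ Submodule.span ℝ (⋃ k < n, Set.range fun j : Fin m =>
        fun i : Fin n => ((A - B * (Rd * Sᵀ)) ^ k *
          (B * ((1 : Matrix (Fin m) (Fin m) ℝ) - Rd * R))) i j) →
      (A - B * (Rd * (S + X * B)ᵀ)).mulVec v =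
      (A - B * (Rd * (S + Y * B)ᵀ)).mulVec v := by
  have hR : Rᵀ = R := by
    have h := hPi.isHermitian
    rw [isHermitian_fromBlocks_iff] at h
    simpa [IsHermitian] using h.2.2.2
  have hRd : Rdᵀ = Rd := pinv_symm_s15 hR hRd1 hRd2 hRd3 hRd4
  have hRG : R * (1 - Rd * R) = 0 := by
    rw [Matrix.mul_sub, Matrix.mul_one, ← Matrix.mul_assoc, hRd1, sub_self]
  have hSG : S * (1 - Rd * R) = 0 := by
    refine ext_of_mulVec_single fun j => ?_
    rw [← mulVec_mulVec, zero_mulVec]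
    exact popov_ker hPi (by rw [mulVec_mulVec, hRG, zero_mulVec])
  have hS : R * Rd * Sᵀ = Sᵀ := by
    have h : S * (Rd * R) = S := by
      rw [Matrix.mul_sub, Matrix.mul_one, sub_eq_zero] at hSG
      exact hSG.symm
    simpa [transpose_mul, hR, hRd] using congrArg transpose h
  have main : ∀ Z : Matrix (Fin n) (Fin n) ℝ, Zᵀ = Z →
      Z * A + Aᵀ * Z - (S + Z * B) * Rd * (S + Z * B)ᵀ + Q = 0 →
      (∀ v : Fin m → ℝ, R.mulVec v = 0 → (S + Z * B).mulVec v = 0) →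
      ∀ v : Fin n → ℝ,
        v ∈ Submodule.span ℝ (⋃ k < n, Set.range fun j : Fin m =>
          fun i : Fin n => ((A - B * (Rd * Sᵀ)) ^ k *
            (B * ((1 : Matrix (Fin m) (Fin m) ℝ) - Rd * R))) i j) →
        Z *ᵥ v = 0 := by
    intro Z hZ hg hk v hv
    have hcol : ∀ (k : ℕ) (u : Fin m → ℝ),
        Z *ᵥ (((A - B * (Rd * Sᵀ)) ^ k * (B * (1 - Rd * R))) *ᵥ u) = 0 := by
      intro k u
      induction k with
      | zero =>
        have h := hk ((1 - Rd * R) *ᵥ u) (by rw [mulVec_mulVec, hRG, zero_mulVec])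
        rw [mulVec_mulVec, Matrix.add_mul, hSG, zero_add] at h
        rw [pow_zero, Matrix.one_mul, mulVec_mulVec, ← Matrix.mul_assoc, h]
      | succ k ih =>
        have h := mulVec_F_eq_zero hPi hS hRd hZ hg ih
        rwa [mulVec_mulVec _ (A - B * (Rd * Sᵀ)), ← Matrix.mul_assoc, ← pow_succ'] at h
    induction hv using Submodule.span_induction with
    | mem x hx =>
      simp only [Set.mem_iUnion, Set.mem_range] at hx
      obtain ⟨k, -, j, rfl⟩ := hx
      have h := hcol k (Pi.single j 1)
      rw [mulVec_single_one] at h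
      exact h
    | zero => exact mulVec_zero _
    | add x y _ _ hx hy => rw [mulVec_add, hx, hy, add_zero]
    | smul a x _ hx => rw [mulVec_smul, hx, smul_zero]
  intro v hv
  have hF : ∀ Z : Matrix (Fin n) (Fin n) ℝ, Zᵀ = Z → Z *ᵥ v = 0 →
      (A - B * (Rd * (S + Z * B)ᵀ)) *ᵥ v = (A - B * (Rd * Sᵀ)) *ᵥ v := by
    intro Z hZ hZv
    have e : A - B * (Rd * (S + Z * B)ᵀ) = A - B * (Rd * Sᵀ) - B * Rd * Bᵀ * Z := by
      rw [transpose_add, transpose_mul, hZ]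
      simp only [Matrix.mul_add, Matrix.mul_assoc, sub_add_eq_sub_sub]
    rw [e, sub_mulVec, ← mulVec_mulVec, hZv, mulVec_zero, sub_zero]
  rw [hF X hX (main X hX hgcareX hkerX v hv), hF Y hY (main Y hY hgcareY hkerY v hv)]
end
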